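/- arXiv:math/9403211 — 2 statements merged into one kernel-verified Lean document; each statement's English description precedes it below -/
import Mathlib

section
/- Let $X$ be a real or complex Banach space and let $(x_n)$ be a bounded sequence in $X$ that admits $\varepsilon$-$\ell^1$-blocks for every $\varepsilon > 0$. Then $(x_n)$ has a weakly Cauchy subsequence, i.e. a subsequence $(x_{n_k})$ such that $(x'(x_{n_k}))_k$ converges for every $x' \in X'$. -/
/-!
The argument is Rosenthal's dichotomy. Fix `ε > 0` and view `x n` as the function `f ↦ f (x n)` on
a ball of the dual; its values lie in a compact set, which finitely many small balls cover. If no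
infinite set of indices makes every functional oscillate by at most `ε` in the limit, then for two
of the small balls, roughly `ε` apart, and some infinite set `M` of indices, along every infinite
subset of `M` some functional visits both balls infinitely often. A fusion argument upgrades this
to independence: along some infinite `N ⊆ M`, every finite pattern of visits to the two balls is
realised by a functional. Two functionals with opposite patterns, chosen according to the signs of
the coefficients, bound `‖∑ n ∈ s, a n • x n‖` below by a fixed multiple of `∑ n ∈ s, ‖a n‖` for
all finite `s ⊆ N`, so `N` contains no small blocks. Hence `ε`-oscillation can be enforced for
every `ε`, and a diagonal subsequence is weakly Cauchy.
-/

open Filter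

/-- A bounded sequence `(xₙ)` in a Banach space over `𝕜` admits
`ε`-`ℓ¹`-blocks if for every infinite `M ⊆ ℕ` there are `i₁ < ⋯ < i_r` in `M`
and scalars `a₁,…,a_r` with `∑ |a_ρ| = 1` and `‖∑ a_ρ x_{i_ρ}‖ ≤ ε`. -/
def AdmitsL1Blocks (𝕜 : Type*) [RCLike 𝕜] {X : Type*} [NormedAddCommGroup X]
    [NormedSpace 𝕜 X] (x : ℕ → X) (ε : ℝ) : Prop :=
  ∀ M : Set ℕ, M.Infinite →
    ∃ (r : ℕ) (i : Fin r → ℕ) (a : Fin r → 𝕜),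
      StrictMono i ∧ (∀ ρ, i ρ ∈ M) ∧ (∑ ρ, ‖a ρ‖) = 1 ∧
        ‖∑ ρ, a ρ • x (i ρ)‖ ≤ ε

section Fusion

/-- The set `s` collects the terms already chosen, and `N` is the reservoir for later ones. -/
theorem exists_strictMono_fusion {P : Finset ℕ → Set ℕ → Prop} (hanti : ∀ s, Antitone (P s))
    {M : Set ℕ} (hM : M.Infinite) (h0 : P ∅ M)
    (hstep : ∀ s, ∀ N ⊆ M, N.Infinite → P s N →
      ∃ n ∈ N, ∃ N' ⊆ N, N'.Infinite ∧ P (insert n s) N') :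
    ∃ n : ℕ → ℕ, StrictMono n ∧ (∀ k, n k ∈ M) ∧
      ∀ k, P ((Finset.range k).image n) (n '' Set.Ici k) := by
  let Valid (σ : Finset ℕ × Set ℕ) : Prop := σ.2 ⊆ M ∧ σ.2.Infinite ∧ P σ.1 σ.2
  have hstep' (σ : Finset ℕ × Set ℕ) (hσ : Valid σ) :
      ∃ n ∈ σ.2, ∃ N' ⊆ σ.2 ∩ Set.Ioi n, Valid (insert n σ.1, N') := by
    obtain ⟨n, hn, N', hN', hinf, hP⟩ := hstep σ.1 σ.2 hσ.1 hσ.2.1 hσ.2.2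
    refine ⟨n, hn, N' \ Set.Iic n, fun j hj => ⟨hN' hj.1, by simpa using hj.2⟩, ?_, ?_, ?_⟩
    · exact Set.sdiff_subset.trans (hN'.trans hσ.1)
    · exact hinf.sdiff (Set.finite_Iic n)
    · exact hanti _ Set.sdiff_subset hP
  choose! pick hpick rest hrest hvalid using hstep'
  let σ (k : ℕ) : Finset ℕ × Set ℕ := (fun ρ => (insert (pick ρ) ρ.1, rest ρ))^[k] (∅, M)
  have hσ_succ (k : ℕ) : σ (k + 1) = (insert (pick (σ k)) (σ k).1, rest (σ k)) :=
    Function.iterate_succ_apply' _ k _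
  have hσ (k : ℕ) : Valid (σ k) := by
    induction k with
    | zero => exact ⟨subset_rfl, hM, h0⟩
    | succ k ih => exact hσ_succ k ▸ hvalid _ ih
  let n (k : ℕ) : ℕ := pick (σ k)
  have hreservoir_succ (k : ℕ) : (σ (k + 1)).2 ⊆ (σ k).2 ∩ Set.Ioi (n k) := by
    rw [hσ_succ]
    exact hrest _ (hσ k)
  have hreservoir : Antitone fun k => (σ k).2 :=
    antitone_nat_of_succ_le fun k => (hreservoir_succ k).trans Set.inter_subset_left
  have hn_mem (k : ℕ) : n k ∈ (σ k).2 := hpick _ (hσ k)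
  have hchosen (k : ℕ) : (σ k).1 = (Finset.range k).image n := by
    induction k with
    | zero => rfl
    | succ k ih => rw [hσ_succ, Finset.range_add_one, Finset.image_insert, ← ih]
  refine ⟨n, strictMono_nat_of_lt_succ fun k => (hreservoir_succ k (hn_mem (k + 1))).2,
    fun k => (hσ k).1 (hn_mem k), fun k => ?_⟩
  have htail : n '' Set.Ici k ⊆ (σ k).2 :=
    Set.image_subset_iff.2 fun j hj => hreservoir hj (hn_mem j)
  exact hchosen k ▸ hanti _ htail (hσ k).2.2

theorem exists_strictMono_forall_tail {H : ℕ → Set ℕ → Prop} (hanti : ∀ k, Antitone (H k))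
    (hdense : ∀ k, ∀ M : Set ℕ, M.Infinite → ∃ N ⊆ M, N.Infinite ∧ H k N) :
    ∃ n : ℕ → ℕ, StrictMono n ∧ ∀ k, H k (n '' Set.Ioi k) := by
  let P (s : Finset ℕ) (N : Set ℕ) : Prop := ∀ k < s.card, H k N
  have hstep (s : Finset ℕ) (N : Set ℕ) (hN : N.Infinite) (hH : P s N) :
      ∃ n ∈ N, ∃ N' ⊆ N, N'.Infinite ∧ P (insert n s) N' := by
    obtain ⟨n, hn⟩ := hN.nonempty
    obtain ⟨N', hN', hinf, hH'⟩ := hdense s.card N hN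
    refine ⟨n, hn, N', hN', hinf, fun k hk => ?_⟩
    rcases (Nat.lt_succ_iff.1 (hk.trans_le (Finset.card_insert_le n s))).lt_or_eq with hk | rfl
    · exact hanti k hN' (hH k hk)
    · exact hH'
  obtain ⟨n, hn, -, hH⟩ := exists_strictMono_fusion (P := P)
    (fun s N N' hN hH k hk => hanti k hN (hH k hk)) Set.infinite_univ (by simp [P])
    fun s N _ => hstep s N
  refine ⟨n, hn, fun k => ?_⟩
  have hcard : k < ((Finset.range (k + 1)).image n).card := by
    rw [Finset.card_image_of_injective _ hn.injective, Finset.card_range]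
    exact k.lt_succ_self
  exact hanti k (Set.image_mono fun j hj => Nat.succ_le_of_lt hj) (hH (k + 1) k hcard)

theorem exists_mem_forall_le_of_finite {α κ : Type*} [Preorder α] {F : Set κ} (hF : F.Finite)
    {G : κ → α → Prop} (hG : ∀ c, Monotone (G c)) {M : α} (h : ∀ N ≤ M, ∃ c ∈ F, G c N) :
    ∃ c ∈ F, ∃ N₀ ≤ M, ∀ N ≤ N₀, G c N := by
  by_contra! hbad
  have havoid : ∃ N ≤ M, ∀ c ∈ F, ¬ G c N := by
    clear h
    induction F, hF using Set.Finite.induction_on with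
    | empty => exact ⟨M, le_rfl, by simp⟩
    | @insert c s _ _ ih =>
      obtain ⟨N, hN, hs⟩ := ih fun d hd => hbad d (Set.mem_insert_of_mem c hd)
      obtain ⟨N', hN', hcN'⟩ := hbad c (Set.mem_insert c s) N hN
      exact ⟨N', hN'.trans hN, Set.forall_mem_insert.2
        ⟨hcN', fun d hd hdN' => hs d hd (hG d hN' hdN')⟩⟩
  obtain ⟨N, hN, hnone⟩ := havoid
  obtain ⟨c, hc, hcN⟩ := h N hN
  exact hnone c hc hcN

end Fusion

section Independence

variable {ι T : Type*} {A : ι → ℕ → Set T} {S S' : Set T} {M M' : Set ℕ} {t : T}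

/-- The point `t` visits each of the families `A b` infinitely often along `N`. -/
def OscillatesOn (A : ι → ℕ → Set T) (N : Set ℕ) (t : T) : Prop :=
  ∀ b, ∃ᶠ n in atTop, n ∈ N ∧ t ∈ A b n

/-- Along every infinite subset of `M` some point of `S` oscillates: no passage to a subsequence
makes the points of `S` eventually avoid one of the families `A b`. -/
def HereditarilyOscillates (A : ι → ℕ → Set T) (S : Set T) (M : Set ℕ) : Prop :=
  ∀ N ⊆ M, N.Infinite → ∃ t ∈ S, OscillatesOn A N t

/-- Independence of the families `A b` in `S` along `N`, in the sense of Rosenthal: a point of `S`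
can be prescribed to lie in any one of the sets `A b n` for each of finitely many `n ∈ N`. -/
def IndependentOn (A : ι → ℕ → Set T) (S : Set T) (N : Set ℕ) : Prop :=
  ∀ s : Finset ℕ, ↑s ⊆ N → ∀ τ : ℕ → ι, ∃ t ∈ S, ∀ n ∈ s, t ∈ A (τ n) n

theorem OscillatesOn.of_tail_subset {m : ℕ} (h : OscillatesOn A M t) (hM : M ∩ Set.Ioi m ⊆ M') :
    OscillatesOn A M' t := fun b =>
  ((h b).and_eventually (eventually_gt_atTop m)).mono fun _ hn => ⟨hM ⟨hn.1.1, hn.2⟩, hn.1.2⟩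

theorem OscillatesOn.mono (h : OscillatesOn A M t) (hM : M ⊆ M') : OscillatesOn A M' t :=
  h.of_tail_subset (m := 0) (Set.inter_subset_left.trans hM)

theorem HereditarilyOscillates.mono (h : HereditarilyOscillates A S M) (hS : S ⊆ S')
    (hM : M' ⊆ M) : HereditarilyOscillates A S' M' := fun N hN hinf =>
  (h N (hN.trans hM) hinf).imp fun _ ht => ⟨hS ht.1, ht.2⟩

/-- If every choice of `n` failed, fusion and the pigeonhole principle would give a pair `(j, b)`
and an infinite `N` such that no point of `S j` lying in some `A b n` with `n ∈ N` oscillates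
on `N`; but a point of `S j` oscillating on `N` does lie in such an `A b n`. -/
theorem exists_hereditarilyOscillates_inter [Finite ι] {κ : Type*} [Finite κ] {S : κ → Set T}
    (hM : M.Infinite) (hS : ∀ j, HereditarilyOscillates A (S j) M) :
    ∃ n ∈ M, ∃ N ⊆ M, N.Infinite ∧ ∀ j b, HereditarilyOscillates A (S j ∩ A b n) N := by
  by_contra! hfail
  let P (s : Finset ℕ) (N : Set ℕ) : Prop :=
    ∀ n ∈ s, ∃ j b, ∀ t ∈ S j ∩ A b n, ¬ OscillatesOn A N t
  have hanti (s : Finset ℕ) : Antitone (P s) := fun N N' hN h n hn =>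
    (h n hn).imp fun j => Exists.imp fun b hb t ht hosc => hb t ht (hosc.mono hN)
  have hstep (s : Finset ℕ) (N : Set ℕ) (hNM : N ⊆ M) (hN : N.Infinite) (hs : P s N) :
      ∃ n ∈ N, ∃ N' ⊆ N, N'.Infinite ∧ P (insert n s) N' := by
    obtain ⟨n, hn⟩ := hN.nonempty
    obtain ⟨j, b, hjb⟩ := hfail n (hNM hn) N hNM hN
    unfold HereditarilyOscillates at hjb
    push Not at hjb
    obtain ⟨N', hN', hinf, hN'osc⟩ := hjb
    exact ⟨n, hn, N', hN', hinf,
      (Finset.forall_mem_insert _ _ _).2 ⟨⟨j, b, hN'osc⟩, hanti s hN' hs⟩⟩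
  obtain ⟨n, hn, hnM, hbad⟩ := exists_strictMono_fusion hanti hM (by simp [P]) hstep
  choose j b hjb using fun k =>
    hbad (k + 1) (n k) (Finset.mem_image_of_mem n (Finset.self_mem_range_succ k))
  obtain ⟨⟨j₀, b₀⟩, hK⟩ := Finite.exists_infinite_fiber fun k => (j k, b k)
  set K := (fun k => (j k, b k)) ⁻¹' {(j₀, b₀)}
  obtain ⟨t, htS, ht⟩ := hS j₀ (n '' K) (Set.image_subset_iff.2 fun k _ => hnM k)
    ((Set.infinite_coe_iff.1 hK).image hn.injective.injOn)
  obtain ⟨_, ⟨k, hk, rfl⟩, htA⟩ := (ht b₀).exists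
  obtain ⟨rfl, rfl⟩ := Prod.mk.inj hk
  refine hjb k t ⟨htS, htA⟩ (ht.of_tail_subset (m := n k) ?_)
  rintro _ ⟨⟨i, -, rfl⟩, hi⟩
  exact ⟨i, hn.lt_iff_lt.1 hi, rfl⟩

theorem HereditarilyOscillates.exists_independentOn [Finite ι] (hM : M.Infinite)
    (hS : HereditarilyOscillates A S M) : ∃ N ⊆ M, N.Infinite ∧ IndependentOn A S N := by
  let P (s : Finset ℕ) (N : Set ℕ) : Prop :=
    ∀ τ : s → ι, HereditarilyOscillates A {t ∈ S | ∀ i, t ∈ A (τ i) i} N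
  have hstep (s : Finset ℕ) (N : Set ℕ) (hN : N.Infinite) (hs : P s N) :
      ∃ n ∈ N, ∃ N' ⊆ N, N'.Infinite ∧ P (insert n s) N' := by
    obtain ⟨n, hn, N', hN', hinf, hosc⟩ := exists_hereditarilyOscillates_inter hN hs
    refine ⟨n, hn, N', hN', hinf, fun τ => ?_⟩
    refine (hosc (fun i => τ ⟨i, Finset.mem_insert_of_mem i.2⟩)
      (τ ⟨n, Finset.mem_insert_self n s⟩)).mono ?_ subset_rfl
    rintro t ⟨⟨htS, hts⟩, htn⟩
    refine ⟨htS, ?_⟩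
    rintro ⟨m, hm⟩
    obtain rfl | hms := Finset.mem_insert.1 hm
    · exact htn
    · exact hts ⟨m, hms⟩
  obtain ⟨n, hn, hnM, hpattern⟩ := exists_strictMono_fusion (P := P)
    (fun s N N' hN h τ => (h τ).mono subset_rfl hN) hM (by simpa [P] using hS)
    fun s N _ => hstep s N
  refine ⟨Set.range n, Set.range_subset_iff.2 hnM,
    Set.infinite_range_of_injective hn.injective, fun s hs τ => ?_⟩
  set k := s.sup id + 1
  have hsk {m : ℕ} (hm : m ∈ s) : m ∈ (Finset.range k).image n := by
    obtain ⟨j, rfl⟩ := hs hm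
    have hj : j ≤ s.sup id := hn.le_apply.trans (Finset.le_sup (f := id) hm)
    exact Finset.mem_image_of_mem n (Finset.mem_range_succ_iff.2 hj)
  obtain ⟨t, ⟨htS, ht⟩, -⟩ := hpattern k (fun i => τ i) _ subset_rfl
    ((Set.Ici_infinite k).image hn.injective.injOn)
  exact ⟨t, htS, fun m hm => ht ⟨m, hsk hm⟩⟩

end Independence

section Oscillation

variable {T E : Type*} [PseudoMetricSpace E]

/-- The oscillation of `u` along `N`, in the limit, is at most `ε`. -/
def OscLEOn (u : ℕ → E) (N : Set ℕ) (ε : ℝ) : Prop :=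
  ∀ᶠ p : ℕ × ℕ in atTop, p.1 ∈ N → p.2 ∈ N → dist (u p.1) (u p.2) ≤ ε

theorem OscLEOn.anti {u : ℕ → E} {N N' : Set ℕ} {ε : ℝ} (h : OscLEOn u N ε) (hN : N' ⊆ N) :
    OscLEOn u N' ε :=
  h.mono fun _ hp h₁ h₂ => hp (hN h₁) (hN h₂)

theorem cauchySeq_comp_of_oscLEOn {u : ℕ → E} {n : ℕ → ℕ} (hn : StrictMono n)
    (h : ∀ ε > 0, ∃ k, OscLEOn u (n '' Set.Ioi k) ε) : CauchySeq (u ∘ n) := by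
  refine Metric.cauchySeq_iff.2 fun ε hε => ?_
  obtain ⟨k, hk⟩ := h (ε / 2) (half_pos hε)
  obtain ⟨m, hm⟩ := eventually_atTop_prod_self'.1 hk
  refine ⟨max (k + 1) m, fun i hi j hj => ?_⟩
  rw [ge_iff_le, max_le_iff] at hi hj
  exact (hm _ (hi.2.trans hn.le_apply) _ (hj.2.trans hn.le_apply)
    ⟨i, hi.1, rfl⟩ ⟨j, hj.1, rfl⟩).trans_lt (half_lt_self hε)

/-- A pair of points of `E` is encoded as a map `ℤˣ → E`, so that negating the sign swaps them. -/
theorem exists_oscillatesOn_of_not_oscLEOn {F : Set E} (hF : F.Finite) {δ : ℝ} {φ : ℕ → T → E}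
    {t : T} (hcover : ∀ n, ∃ y ∈ F, dist (φ n t) y ≤ δ) {N : Set ℕ} {ε : ℝ}
    (hosc : ¬ OscLEOn (φ · t) N ε) :
    ∃ c : ℤˣ → E, (∀ u, c u ∈ F) ∧ ε < dist (c 1) (c (-1)) + 2 * δ ∧
      OscillatesOn (fun u n => φ n ⁻¹' Metric.closedBall (c u) δ) N t := by
  choose y hyF hy using hcover
  let c (p : ℕ × ℕ) (u : ℤˣ) : E := if u = 1 then y p.1 else y p.2
  have hcF (p : ℕ × ℕ) (u : ℤˣ) : c p u ∈ F := by
    dsimp only [c]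
    split_ifs <;> exact hyF _
  have hfreq : ∃ᶠ p : ℕ × ℕ in atTop, ∃ d ∈ {d : ℤˣ → E | ∀ u, d u ∈ F},
      c p = d ∧ p.1 ∈ N ∧ p.2 ∈ N ∧ ε < dist (φ p.1 t) (φ p.2 t) := by
    refine (not_eventually.1 hosc).mono fun p hp => ⟨c p, hcF p, rfl, ?_⟩
    simpa only [Classical.not_imp, not_le] using hp
  obtain ⟨d, hdF, hd⟩ := (Set.Finite.pi' fun _ => hF).frequently_exists.1 hfreq
  refine ⟨d, hdF, ?_, fun u => ?_⟩
  · obtain ⟨p, rfl, -, -, hp⟩ := hd.exists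
    have := dist_triangle4 (φ p.1 t) (y p.1) (y p.2) (φ p.2 t)
    have h₁ := hy p.1
    have h₂ := hy p.2
    rw [dist_comm] at h₂
    simp only [c, if_true, show (-1 : ℤˣ) ≠ 1 by decide, if_false]
    linarith
  · rw [← prod_atTop_atTop_eq] at hd
    obtain rfl | rfl := Int.units_eq_one_or u
    · refine tendsto_fst.frequently (hd.mono ?_)
      rintro p ⟨rfl, hp, -, -⟩
      exact ⟨hp, hy p.1⟩
    · refine tendsto_snd.frequently (hd.mono ?_)
      rintro p ⟨rfl, -, hp, -⟩
      exact ⟨hp, hy p.2⟩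

theorem exists_oscLEOn_or_exists_independentOn {S : Set T} {B : Set E} (hB : TotallyBounded B)
    {φ : ℕ → T → E} (hφ : ∀ n, Set.MapsTo (φ n) S B) (ε : ℝ) {δ : ℝ} (hδ : 0 < δ)
    {M : Set ℕ} (hM : M.Infinite) :
    (∃ N ⊆ M, N.Infinite ∧ ∀ t ∈ S, OscLEOn (φ · t) N ε) ∨
      ∃ c : ℤˣ → E, ε < dist (c 1) (c (-1)) + 2 * δ ∧ ∃ N ⊆ M, N.Infinite ∧
        IndependentOn (fun u n => φ n ⁻¹' Metric.closedBall (c u) δ) S N := by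
  refine or_iff_not_imp_left.2 fun hosc => ?_
  push Not at hosc
  obtain ⟨F, hF, hBF⟩ := Metric.totallyBounded_iff.1 hB δ hδ
  have hcover (t : T) (ht : t ∈ S) (n : ℕ) : ∃ y ∈ F, dist (φ n t) y ≤ δ := by
    obtain ⟨y, hy, hty⟩ := Set.mem_iUnion₂.1 (hBF (hφ n ht))
    exact ⟨y, hy, hty.le⟩
  let G (c : ℤˣ → E) (N : {N : Set ℕ // N.Infinite}) : Prop :=
    ∃ t ∈ S, OscillatesOn (fun u n => φ n ⁻¹' Metric.closedBall (c u) δ) N t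
  have hvisit (N : {N : Set ℕ // N.Infinite}) (hNM : N ≤ ⟨M, hM⟩) :
      ∃ c ∈ {c : ℤˣ → E | (∀ u, c u ∈ F) ∧ ε < dist (c 1) (c (-1)) + 2 * δ}, G c N := by
    obtain ⟨t, ht, htosc⟩ := hosc N hNM N.2
    obtain ⟨c, hcF, hc, htc⟩ := exists_oscillatesOn_of_not_oscLEOn hF (hcover t ht) htosc
    exact ⟨c, ⟨hcF, hc⟩, t, ht, htc⟩
  obtain ⟨c, ⟨-, hc⟩, ⟨N₀, hN₀⟩, hN₀M, hG⟩ := exists_mem_forall_le_of_finite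
    ((Set.Finite.pi' fun _ => hF).subset fun c hc => hc.1)
    (fun c N N' hN => Exists.imp fun t ht => ⟨ht.1, ht.2.mono hN⟩) hvisit
  obtain ⟨N, hN, hinf, hind⟩ := HereditarilyOscillates.exists_independentOn hN₀
    fun N hN hinf => hG ⟨N, hinf⟩ hN
  exact ⟨c, hc, N, hN.trans hN₀M, hinf, hind⟩

end Oscillation

section Signs

variable {κ : Type*}

theorem exists_units_sum_abs_le_norm {V : Type*} [SeminormedAddCommGroup V] (ℓ : V →+ ℝ)
    (hℓ : ∀ v, ℓ v ≤ ‖v‖) (s : Finset κ) (a : κ → V) :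
    ∃ σ : κ → ℤˣ, ∑ i ∈ s, |ℓ (a i)| ≤ ‖∑ i ∈ s, σ i • a i‖ := by
  have hsign (i : κ) : ∃ u : ℤˣ, ℓ (u • a i) = |ℓ (a i)| := by
    obtain h | h := abs_choice (ℓ (a i))
    · exact ⟨1, by simp [h]⟩
    · exact ⟨-1, by simp [h]⟩
  choose σ hσ using hsign
  refine ⟨σ, ?_⟩
  calc ∑ i ∈ s, |ℓ (a i)| = ℓ (∑ i ∈ s, σ i • a i) := by simp only [map_sum, hσ]
    _ ≤ ‖∑ i ∈ s, σ i • a i‖ := hℓ _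

theorem exists_units_half_sum_norm_le {𝕜 : Type*} [RCLike 𝕜] (s : Finset κ) (a : κ → 𝕜) :
    ∃ σ : κ → ℤˣ, (∑ i ∈ s, ‖a i‖) / 2 ≤ ‖∑ i ∈ s, σ i • a i‖ := by
  have hnorm (z : 𝕜) : ‖z‖ ≤ |RCLike.re z| + |RCLike.im z| := by
    refine le_of_sq_le_sq ?_ (by positivity)
    rw [RCLike.norm_sq_eq_def, ← sq, ← sq, add_sq, sq_abs, sq_abs]
    linarith [mul_nonneg (abs_nonneg (RCLike.re z)) (abs_nonneg (RCLike.im z))]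
  have hsum : ∑ i ∈ s, ‖a i‖ ≤ ∑ i ∈ s, |RCLike.re (a i)| + ∑ i ∈ s, |RCLike.im (a i)| := by
    rw [← Finset.sum_add_distrib]
    exact Finset.sum_le_sum fun i _ => hnorm (a i)
  obtain h | h := le_total (∑ i ∈ s, |RCLike.re (a i)|) (∑ i ∈ s, |RCLike.im (a i)|)
  · obtain ⟨σ, hσ⟩ := exists_units_sum_abs_le_norm RCLike.im RCLike.im_le_norm s a
    exact ⟨σ, by linarith⟩
  · obtain ⟨σ, hσ⟩ := exists_units_sum_abs_le_norm RCLike.re RCLike.re_le_norm s a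
    exact ⟨σ, by linarith⟩

end Signs

section Blocks

variable {𝕜 X : Type*} [RCLike 𝕜] [NormedAddCommGroup X] [NormedSpace 𝕜 X] {x : ℕ → X}

theorem AdmitsL1Blocks.exists_finset {ε : ℝ} (h : AdmitsL1Blocks 𝕜 x ε) {M : Set ℕ}
    (hM : M.Infinite) :
    ∃ (s : Finset ℕ) (a : ℕ → 𝕜), ↑s ⊆ M ∧ ∑ n ∈ s, ‖a n‖ = 1 ∧ ‖∑ n ∈ s, a n • x n‖ ≤ ε := by
  obtain ⟨r, i, a, hi, hiM, ha, hle⟩ := h M hM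
  refine ⟨Finset.univ.map ⟨i, hi.injective⟩, Function.extend i a 0, ?_, ?_, ?_⟩
  · simpa [Set.range_subset_iff] using hiM
  · simpa [hi.injective.extend_apply] using ha
  · simpa [hi.injective.extend_apply] using hle

/-- The functional is the difference of two members of the ball with opposite patterns `σ`, `-σ`. -/
theorem IndependentOn.exists_strongDual_near_signs {c : ℤˣ → 𝕜} {δ R : ℝ} {N : Set ℕ}
    (h : IndependentOn (fun u n => (fun f : StrongDual 𝕜 X => f (x n)) ⁻¹'
      Metric.closedBall (c u) δ) (Metric.closedBall 0 R) N)
    {s : Finset ℕ} (hs : ↑s ⊆ N) (σ : ℕ → ℤˣ) :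
    ∃ f : StrongDual 𝕜 X, ‖f‖ ≤ 2 * R ∧
      ∀ n ∈ s, ‖σ n • (c 1 - c (-1)) - f (x n)‖ ≤ 2 * δ := by
  obtain ⟨f, hfR, hf⟩ := h s hs σ
  obtain ⟨g, hgR, hg⟩ := h s hs fun n => -σ n
  rw [mem_closedBall_zero_iff] at hfR hgR
  have hswap (u : ℤˣ) : u • (c 1 - c (-1)) = c u - c (-u) := by
    obtain rfl | rfl := Int.units_eq_one_or u <;> simp
  refine ⟨f - g, (norm_sub_le f g).trans (by linarith), fun n hn => ?_⟩
  calc ‖σ n • (c 1 - c (-1)) - (f - g) (x n)‖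
      = ‖(g (x n) - c (-σ n)) - (f (x n) - c (σ n))‖ := by
        rw [hswap, sub_apply]
        congr 1
        ring
    _ ≤ ‖g (x n) - c (-σ n)‖ + ‖f (x n) - c (σ n)‖ := norm_sub_le _ _
    _ ≤ δ + δ := add_le_add (mem_closedBall_iff_norm.1 (hg n hn))
        (mem_closedBall_iff_norm.1 (hf n hn))
    _ = 2 * δ := (two_mul δ).symm

theorem IndependentOn.sum_norm_mul_le_norm_sum_smul {c : ℤˣ → 𝕜} {δ R : ℝ} {N : Set ℕ}
    (h : IndependentOn (fun u n => (fun f : StrongDual 𝕜 X => f (x n)) ⁻¹'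
      Metric.closedBall (c u) δ) (Metric.closedBall 0 R) N)
    {s : Finset ℕ} (hs : ↑s ⊆ N) (a : ℕ → 𝕜) :
    (∑ n ∈ s, ‖a n‖) * (dist (c 1) (c (-1)) / 2 - 2 * δ) ≤ 2 * R * ‖∑ n ∈ s, a n • x n‖ := by
  obtain ⟨σ, hσ⟩ := exists_units_half_sum_norm_le s a
  obtain ⟨f, hfR, hf⟩ := h.exists_strongDual_near_signs hs σ
  rw [dist_eq_norm]
  set d := c 1 - c (-1)
  have herror : ‖(∑ n ∈ s, σ n • a n) * d - f (∑ n ∈ s, a n • x n)‖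
      ≤ (∑ n ∈ s, ‖a n‖) * (2 * δ) := by
    have hsplit : (∑ n ∈ s, σ n • a n) * d - f (∑ n ∈ s, a n • x n)
        = ∑ n ∈ s, a n * (σ n • d - f (x n)) := by
      simp only [map_sum, map_smul, smul_eq_mul, Finset.sum_mul, mul_sub, Finset.sum_sub_distrib,
        mul_smul_comm, smul_mul_assoc]
    rw [hsplit, Finset.sum_mul]
    refine norm_sum_le_of_le _ fun n hn => ?_
    rw [norm_mul]
    exact mul_le_mul_of_nonneg_left (hf n hn) (norm_nonneg _)
  have hupper : ‖f (∑ n ∈ s, a n • x n)‖ ≤ 2 * R * ‖∑ n ∈ s, a n • x n‖ :=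
    f.le_of_opNorm_le hfR _
  have hlower : (∑ n ∈ s, ‖a n‖) / 2 * ‖d‖ ≤ ‖(∑ n ∈ s, σ n • a n) * d‖ := by
    rw [norm_mul]
    exact mul_le_mul_of_nonneg_right hσ (norm_nonneg d)
  have htriangle := norm_sub_norm_le ((∑ n ∈ s, σ n • a n) * d) (f (∑ n ∈ s, a n • x n))
  linarith

theorem exists_forall_oscLEOn_of_admitsL1Blocks {C : ℝ} (hC : ∀ n, ‖x n‖ ≤ C)
    (h : ∀ ε : ℝ, 0 < ε → AdmitsL1Blocks 𝕜 x ε) {R : ℝ} (hR : 0 < R) {ε : ℝ} (hε : 0 < ε)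
    {M : Set ℕ} (hM : M.Infinite) :
    ∃ N ⊆ M, N.Infinite ∧
      ∀ f ∈ Metric.closedBall (0 : StrongDual 𝕜 X) R, OscLEOn (fun n => f (x n)) N ε := by
  have hbdd (n : ℕ) : Set.MapsTo (fun f : StrongDual 𝕜 X => f (x n)) (Metric.closedBall 0 R)
      (Metric.closedBall 0 (R * C)) := fun f hf => by
    rw [mem_closedBall_zero_iff] at hf ⊢
    exact f.le_of_opNorm_le_of_le hf (hC n)
  refine (exists_oscLEOn_or_exists_independentOn
    (isCompact_closedBall (0 : 𝕜) (R * C)).totallyBounded hbdd ε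
    (δ := ε / 8) (by positivity) hM).resolve_right ?_
  rintro ⟨c, hc, N, -, hN, hind⟩
  obtain ⟨s, a, hs, ha, hle⟩ := (h (ε / (16 * R)) (by positivity)).exists_finset hN
  have hlower := hind.sum_norm_mul_le_norm_sum_smul hs a
  have hupper : 2 * R * ‖∑ n ∈ s, a n • x n‖ ≤ ε / 8 :=
    calc 2 * R * ‖∑ n ∈ s, a n • x n‖ ≤ 2 * R * (ε / (16 * R)) := by gcongr
      _ = ε / 8 := by field_simp; norm_num
  rw [ha] at hlower
  linarith

theorem weakly_cauchy_subsequence_of_blocks_general (x : ℕ → X) (hb : ∃ C : ℝ, ∀ n, ‖x n‖ ≤ C)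
    (h : ∀ ε : ℝ, 0 < ε → AdmitsL1Blocks 𝕜 x ε) :
    ∃ n : ℕ → ℕ, StrictMono n ∧
      ∀ x' : X →L[𝕜] 𝕜, ∃ l : 𝕜, Tendsto (fun k => x' (x (n k))) atTop (nhds l) := by
  obtain ⟨C, hC⟩ := hb
  obtain ⟨n, hn, hosc⟩ := exists_strictMono_forall_tail
    (H := fun k N => ∀ f ∈ Metric.closedBall (0 : StrongDual 𝕜 X) (k + 1),
      OscLEOn (fun n => f (x n)) N (1 / (k + 1)))
    (fun k N N' hN hf f hfk => (hf f hfk).anti hN)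
    (fun k M hM => exists_forall_oscLEOn_of_admitsL1Blocks hC h (by positivity) (by positivity) hM)
  refine ⟨n, hn, fun f => cauchySeq_tendsto_of_complete <|
    cauchySeq_comp_of_oscLEOn (u := fun n => f (x n)) hn fun ε hε => ?_⟩
  obtain ⟨k, hfk, hkε⟩ := ((tendsto_natCast_atTop_atTop.eventually_ge_atTop ‖f‖).and
    (tendsto_one_div_add_atTop_nhds_zero_nat.eventually_le_const hε)).exists
  refine ⟨k, (hosc k f ?_).mono fun p hp h₁ h₂ => (hp h₁ h₂).trans hkε⟩
  exact mem_closedBall_zero_iff.2 (hfk.trans (le_add_of_nonneg_right zero_le_one))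

end Blocks

/-- If a bounded sequence in a (real or complex) Banach space admits
`ε`-`ℓ¹`-blocks for every `ε > 0`, then it has a weakly Cauchy subsequence. -/
theorem weakly_cauchy_subsequence_of_blocks {𝕜 : Type*} [RCLike 𝕜] {X : Type*}
    [NormedAddCommGroup X] [NormedSpace 𝕜 X] [CompleteSpace X]
    (x : ℕ → X) (hb : ∃ C : ℝ, ∀ n, ‖x n‖ ≤ C)
    (h : ∀ ε : ℝ, 0 < ε → AdmitsL1Blocks 𝕜 x ε) :
    ∃ n : ℕ → ℕ, StrictMono n ∧
      ∀ x' : X →L[𝕜] 𝕜, ∃ l : 𝕜,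
        Tendsto (fun k => x' (x (n k))) atTop (nhds l) :=
  weakly_cauchy_subsequence_of_blocks_general x hb h
end

section
/- Let $(x_n)$ be a bounded sequence in a Banach space $X$ over $\mathbb{K} = \mathbb{R}$ or $\mathbb{C}$. Either there is a subsequence $(x_{n_k})$ equivalent to the unit vector basis of $\ell^1$ (i.e. there exists $B > 0$ with $\|\sum_{k=1}^r t_k x_{n_k}\| \geq B \sum_{k=1}^r |t_k|$ for all $r$ and all scalars $t_1,\ldots,t_r$), or there is a subsequence $(x_{n_k})$ which is weakly Cauchy, i.e. $(x'(x_{n_k}))_k$ converges for every $x' \in X'$. -/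
open Filter

/-!
Evaluate the functionals of the dual unit ball on the sequence `x`, and for scalars `a ≠ b` compare
the functionals taking a value near `a` at `x n` with those taking a value near `b`. Suppose that
for every pair `a ≠ b` from a countable dense set, every subsequence of `x` has a further
subsequence along which each functional is near `a` only finitely often or near `b` only finitely
often. Then along a diagonal subsequence the values of each functional have a single cluster point.
Otherwise, for some pair `a ≠ b` and some subsequence this fails hereditarily, and Rosenthal's
combinatorial argument extracts a further subsequence along which every finite pattern of values
near `a` and values near `b` is realised by a functional. Matching the pattern to the signs of the
coefficients `t k`, and subtracting a functional that realises the opposite pattern, bounds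
`‖∑ k, t k • x (n k)‖` below by a multiple of `dist a b * ∑ k, ‖t k‖`.
-/

open Set Metric

section Diagonalization

/-- A property of sets of natural numbers that passes to *almost subsets*, that is, to sets `N`
with `N \ M` finite. These are the properties that survive diagonal extraction. -/
def AlmostHereditary (P : Set ℕ → Prop) : Prop :=
  ∀ ⦃M N : Set ℕ⦄, P M → (N \ M).Finite → P N

theorem AlmostHereditary.mono {P : Set ℕ → Prop} (hP : AlmostHereditary P) {M N : Set ℕ}
    (hM : P M) (hNM : N ⊆ M) : P N :=
  hP hM (by simp [sdiff_eq_empty.2 hNM])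

theorem AlmostHereditary.range_of_image_Ici {P : Set ℕ → Prop} (hP : AlmostHereditary P)
    {u : ℕ → ℕ} {k : ℕ} (h : P (u '' Ici k)) : P (range u) := by
  refine hP h (((finite_Iio k).image u).subset ?_)
  rintro _ ⟨⟨i, rfl⟩, hi⟩
  exact mem_image_of_mem u (mem_Iio.2 (not_le.1 fun hki => hi (mem_image_of_mem u hki)))

/-- Dependent choice of a diagonal sequence: `T` records the state of the construction and `I M q`
says that the reservoir `M` is admissible in state `q`. -/
theorem exists_strictMono_diagonal {T : Type*} {I : Set ℕ → T → Prop} {R : ℕ → T → T → Prop}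
    (hI : ∀ ⦃M N q⦄, N ⊆ M → I M q → I N q)
    (step : ∀ M q, M.Infinite → I M q →
      ∃ n ∈ M, ∃ N ⊆ M, N.Infinite ∧ ∃ q', I N q' ∧ R n q q')
    {L : Set ℕ} {q₀ : T} (hL : L.Infinite) (h₀ : I L q₀) :
    ∃ (u : ℕ → ℕ) (q : ℕ → T), StrictMono u ∧ q 0 = q₀ ∧
      (∀ k, I (u '' Ici k) (q k)) ∧ ∀ k, R (u k) (q k) (q (k + 1)) := by
  let State := {p : Set ℕ × T // p.1.Infinite ∧ I p.1 p.2}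
  have exists_next (p : State) :
      ∃ n ∈ p.1.1, ∃ p' : State, p'.1.1 ⊆ p.1.1 ∩ Ioi n ∧ R n p.1.2 p'.1.2 := by
    obtain ⟨⟨M, q⟩, hM, hMq⟩ := p
    obtain ⟨n, hn, N, hNM, hN, q', hNq', hR⟩ := step M q hM hMq
    have hN' : (N ∩ Ioi n).Infinite := by
      rw [← compl_Iic, ← sdiff_eq]
      exact hN.sdiff (finite_Iic n)
    exact ⟨n, hn, ⟨(N ∩ Ioi n, q'), hN', hI inter_subset_left hNq'⟩,
      inter_subset_inter_left _ hNM, hR⟩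
  choose n hn next hnext hR using exists_next
  let p (k : ℕ) : State := next^[k] ⟨(L, q₀), hL, h₀⟩
  have hp (k : ℕ) : p (k + 1) = next (p k) := Function.iterate_succ_apply' ..
  have hsub (k : ℕ) : (p (k + 1)).1.1 ⊆ (p k).1.1 ∩ Ioi (n (p k)) := hp k ▸ hnext (p k)
  have hanti : Antitone fun k => (p k).1.1 :=
    antitone_nat_of_succ_le fun k => (hsub k).trans inter_subset_left
  refine ⟨fun k => n (p k), fun k => (p k).1.2,
    strictMono_nat_of_lt_succ fun k => (hsub k (hn _)).2, rfl, fun k => ?_,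
    fun k => by simpa only [hp] using hR (p k)⟩
  exact hI (image_subset_iff.2 fun i hi => hanti hi (hn (p i))) (p k).2.2

theorem exists_infinite_forall_mem_of_almostHereditary {P : ℕ → Set ℕ → Prop}
    (hP : ∀ n, AlmostHereditary (P n)) {L : Set ℕ} (hL : L.Infinite)
    (h : ∀ n ∈ L, ∀ M ⊆ L, M.Infinite → ∃ N ⊆ M, N.Infinite ∧ P n N) :
    ∃ M ⊆ L, M.Infinite ∧ ∀ n ∈ M, P n M := by
  obtain ⟨u, q, hu, -, hI, hR⟩ := exists_strictMono_diagonal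
    (I := fun M (q : Set ℕ) => M ⊆ L ∧ ∀ n ∈ q, P n M) (R := fun n _ q' => n ∈ q') (q₀ := ∅)
    (fun M N q hNM hM => ⟨hNM.trans hM.1, fun n hn => (hP n).mono (hM.2 n hn) hNM⟩)
    (fun M q hM hMq => by
      obtain ⟨n, hn⟩ := hM.nonempty
      obtain ⟨N, hNM, hN, hPN⟩ := h n (hMq.1 hn) M hMq.1 hM
      exact ⟨n, hn, N, hNM, hN, {n}, ⟨hNM.trans hMq.1, by simpa using hPN⟩, rfl⟩)
    hL ⟨Subset.rfl, by simp⟩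
  refine ⟨range u, ?_, infinite_range_of_injective hu.injective, forall_mem_range.2 fun k => ?_⟩
  · exact range_subset_iff.2 fun k => (hI k).1 (mem_image_of_mem u self_mem_Ici)
  · exact (hP _).range_of_image_Ici ((hI (k + 1)).2 _ (hR k))

theorem exists_strictMono_forall_of_almostHereditary {ι : Type*} [Countable ι]
    {P : ι → Set ℕ → Prop} (hP : ∀ i, AlmostHereditary (P i))
    (h : ∀ i, ∀ M : Set ℕ, M.Infinite → ∃ N ⊆ M, N.Infinite ∧ P i N) :
    ∃ u : ℕ → ℕ, StrictMono u ∧ ∀ i, P i (range u) := by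
  rcases isEmpty_or_nonempty ι with hι | hι
  · exact ⟨id, strictMono_id, isEmptyElim⟩
  obtain ⟨e, he⟩ := exists_surjective_nat ι
  obtain ⟨u, q, hu, hq₀, hI, hR⟩ := exists_strictMono_diagonal
    (I := fun M k => ∀ j < k, P (e j) M) (R := fun _ k k' => k' = k + 1) (q₀ := 0)
    (fun M N k hNM hM j hj => (hP _).mono (hM j hj) hNM)
    (fun M k hM hMk => by
      obtain ⟨n, hn⟩ := hM.nonempty
      obtain ⟨N, hNM, hN, hPN⟩ := h (e k) M hM
      exact ⟨n, hn, N, hNM, hN, k + 1,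
        Nat.forall_lt_succ_right.2 ⟨fun j hj => (hP _).mono (hMk j hj) hNM, hPN⟩, rfl⟩)
    infinite_univ (by simp)
  have hq (k : ℕ) : q k = k := by
    induction k with
    | zero => exact hq₀
    | succ k ih => rw [hR, ih]
  refine ⟨u, hu, he.forall.2 fun j => (hP _).range_of_image_Ici (hI (j + 1) j ?_)⟩
  rw [hq]
  exact j.lt_succ_self

end Diagonalization

section BooleanIndependence

/-- A family of pairs of sets is Boolean independent if every finite pattern of choices from the
pairs is realised by a point. The two sets of a pair are `A i true` and `A i false`; they need not
be disjoint. -/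
def BooleanIndependent {ι S : Type*} (A : ι → Bool → Set S) : Prop :=
  ∀ (I : Finset ι) (σ : ι → Bool), (⋂ i ∈ I, A i (σ i)).Nonempty

theorem BooleanIndependent.comp {ι κ S : Type*} {A : ι → Bool → Set S}
    (hA : BooleanIndependent A) {v : κ → ι} (hv : v.Injective) :
    BooleanIndependent fun k => A (v k) := by
  intro J σ
  obtain ⟨s, hs⟩ := hA (J.map ⟨v, hv⟩) (Function.extend v σ fun _ => true)
  refine ⟨s, ?_⟩
  simpa [hv.extend_apply] using hs

variable {S : Type*} {A : ℕ → Bool → Set S} {W : Set S} {L M : Set ℕ}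

/-- The sequence of pairs `(A n true, A n false)`, `n ∈ M`, converges on `W` in Rosenthal's sense:
each point of `W` lies in only finitely many of the first sets or in only finitely many of the
second sets. -/
def PairConvergesOn (A : ℕ → Bool → Set S) (W : Set S) (M : Set ℕ) : Prop :=
  ∀ s ∈ W, ∃ b, {n ∈ M | s ∈ A n b}.Finite

/-- No subsequence of the sequence of pairs `(A n true, A n false)`, `n ∈ L`, converges
on `W`. -/
def NoConvergentSubseqOn (A : ℕ → Bool → Set S) (W : Set S) (L : Set ℕ) : Prop :=
  ∀ M ⊆ L, M.Infinite → ¬ PairConvergesOn A W M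

theorem PairConvergesOn.almostHereditary (A : ℕ → Bool → Set S) (W : Set S) :
    AlmostHereditary (PairConvergesOn A W) := by
  intro M N hM hNM s hs
  obtain ⟨b, hb⟩ := hM s hs
  refine ⟨b, (hb.union hNM).subset fun n hn => ?_⟩
  by_cases hnM : n ∈ M
  · exact Or.inl ⟨hnM, hn.2⟩
  · exact Or.inr ⟨hn.1, hnM⟩

theorem NoConvergentSubseqOn.mono (h : NoConvergentSubseqOn A W L) (hML : M ⊆ L) :
    NoConvergentSubseqOn A W M :=
  fun _ hN => h _ (hN.trans hML)

theorem NoConvergentSubseqOn.nonempty (h : NoConvergentSubseqOn A W L) (hL : L.Infinite) :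
    W.Nonempty := by
  by_contra hW
  refine h L Subset.rfl hL ?_
  simp [PairConvergesOn, not_nonempty_iff_eq_empty.1 hW]

theorem pairConvergesOn_of_forall_inter {b : Bool}
    (h : ∀ n ∈ M, PairConvergesOn A (W ∩ A n b) M) : PairConvergesOn A W M := by
  intro s hs
  by_cases hex : ∃ n ∈ M, s ∈ A n b
  · obtain ⟨n, hn, hsn⟩ := hex
    exact h n hn s ⟨hs, hsn⟩
  · exact ⟨b, (finite_empty (α := ℕ)).subset fun n hn => hex ⟨n, hn⟩⟩

theorem exists_forall_noConvergentSubseqOn_inter {F : Set (Set S)} (hF : F.Finite)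
    (hL : L.Infinite) (h : ∀ W ∈ F, NoConvergentSubseqOn A W L) :
    ∃ n ∈ L, ∃ M ⊆ L, M.Infinite ∧ ∀ W ∈ F, ∀ b, NoConvergentSubseqOn A (W ∩ A n b) M := by
  -- If no `n` works, then along some `M` each `n` has a pair `(W, b)` with convergence on
  -- `W ∩ A n b`. By pigeonhole one pair serves infinitely many `n`, along which `W` converges.
  by_contra! hcon
  obtain ⟨M, hML, hM, hconv⟩ := exists_infinite_forall_mem_of_almostHereditary
    (P := fun n M => ∃ p ∈ F ×ˢ (univ : Set Bool), PairConvergesOn A (p.1 ∩ A n p.2) M)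
    (fun n M N ⟨p, hp, hM⟩ hNM => ⟨p, hp, PairConvergesOn.almostHereditary A _ hM hNM⟩) hL
    (fun n hn M hML hM => by
      obtain ⟨W, hW, b, hWb⟩ := hcon n hn M hML hM
      simp only [NoConvergentSubseqOn, not_forall, not_not] at hWb
      obtain ⟨N, hNM, hN, hconv⟩ := hWb
      exact ⟨N, hNM, hN, (W, b), ⟨hW, mem_univ b⟩, hconv⟩)
  obtain ⟨⟨W, b⟩, ⟨hW, -⟩, hN⟩ : ∃ p ∈ F ×ˢ (univ : Set Bool),
      {n ∈ M | PairConvergesOn A (p.1 ∩ A n p.2) M}.Infinite := by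
    by_contra! hfin
    refine hM (((hF.prod finite_univ).biUnion hfin).subset fun n hn => ?_)
    obtain ⟨p, hp, hpn⟩ := hconv n hn
    exact mem_biUnion hp ⟨hn, hpn⟩
  exact h W hW _ ((sep_subset _ _).trans hML) hN <| pairConvergesOn_of_forall_inter fun n hn =>
    (PairConvergesOn.almostHereditary A _).mono hn.2 (sep_subset _ _)

theorem NoConvergentSubseqOn.exists_booleanIndependent (hL : L.Infinite)
    (h : NoConvergentSubseqOn A univ L) :
    ∃ u : ℕ → ℕ, StrictMono u ∧ BooleanIndependent fun k => A (u k) := by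
  obtain ⟨u, F, hu, hF₀, hI, hR⟩ := exists_strictMono_diagonal
    (I := fun M (F : Set (Set S)) => F.Finite ∧ ∀ W ∈ F, NoConvergentSubseqOn A W M)
    (R := fun n F F' => ∀ W ∈ F, ∀ b, W ∩ A n b ∈ F') (q₀ := {univ})
    (fun M N F hNM hM => ⟨hM.1, fun W hW => (hM.2 W hW).mono hNM⟩)
    (fun M F hM hMF => by
      obtain ⟨n, hn, N, hNM, hN, hinter⟩ :=
        exists_forall_noConvergentSubseqOn_inter hMF.1 hM hMF.2
      refine ⟨n, hn, N, hNM, hN, (fun p : Set S × Bool => p.1 ∩ A n p.2) '' (F ×ˢ univ),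
        ⟨(hMF.1.prod finite_univ).image _, ?_⟩, fun W hW b => ⟨(W, b), ⟨hW, mem_univ b⟩, rfl⟩⟩
      rintro _ ⟨⟨W, b⟩, ⟨hW, -⟩, rfl⟩
      exact hinter W hW b)
    hL ⟨finite_singleton _, by simpa using h⟩
  refine ⟨u, hu, fun J σ => ?_⟩
  have cell_mem (k : ℕ) : (⋂ i < k, A (u i) (σ i)) ∈ F k := by
    induction k with
    | zero => simp [hF₀]
    | succ k ih => simpa only [biInter_lt_succ] using hR k _ ih (σ k)
  obtain ⟨k, hk⟩ := J.exists_nat_subset_range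
  have cell_nonempty : (⋂ i < k, A (u i) (σ i)).Nonempty :=
    ((hI k).2 _ (cell_mem k)).nonempty ((Ici_infinite k).image hu.injective.injOn)
  exact cell_nonempty.mono <| biInter_mono (fun i hi => Finset.mem_range.1 (hk hi)) fun _ _ =>
    Subset.rfl

theorem exists_booleanIndependent_or_pairConvergesOn {ι : Type*} [Countable ι]
    (A : ι → ℕ → Bool → Set S) :
    (∃ u : ℕ → ℕ, StrictMono u ∧ ∃ i, BooleanIndependent fun k => A i (u k)) ∨
      ∃ u : ℕ → ℕ, StrictMono u ∧ ∀ i, PairConvergesOn (A i) univ (range u) := by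
  by_cases h : ∃ i, ∃ L : Set ℕ, L.Infinite ∧ NoConvergentSubseqOn (A i) univ L
  · obtain ⟨i, L, hL, hi⟩ := h
    obtain ⟨u, hu, hind⟩ := hi.exists_booleanIndependent hL
    exact Or.inl ⟨u, hu, i, hind⟩
  · refine Or.inr <| exists_strictMono_forall_of_almostHereditary
      (fun i => PairConvergesOn.almostHereditary (A i) univ) fun i L hL => ?_
    simpa only [NoConvergentSubseqOn, not_exists, not_and, not_forall, not_not, exists_prop]
      using not_and.1 (not_exists.1 (not_exists.1 h i) L) hL

end BooleanIndependence

section PointwiseConvergence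

theorem exists_tendsto_of_finite_visits {E ι : Type*} [TopologicalSpace E] {K : Set E}
    (hK : IsCompact K) {V : ι → Bool → Set E}
    (hV : ∀ a b : E, a ≠ b → ∃ i, V i true ∈ nhds a ∧ V i false ∈ nhds b)
    {y : ℕ → E} (hy : ∀ n, y n ∈ K) (hfin : ∀ i, ∃ b, {n | y n ∈ V i b}.Finite) :
    ∃ l, Tendsto y atTop (nhds l) := by
  have infinite_visits {a : E} {U : Set E} (ha : MapClusterPt a atTop y) (hU : U ∈ nhds a) :
      {n | y n ∈ U}.Infinite :=
    Nat.frequently_atTop_iff_infinite.1 (mapClusterPt_iff_frequently.1 ha U hU)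
  obtain ⟨a, -, ha⟩ := hK.exists_mapClusterPt (f := atTop) (tendsto_principal.2 (.of_forall hy))
  refine ⟨a, hK.tendsto_nhds_of_unique_mapClusterPt (.of_forall hy) fun b _ hb => ?_⟩
  by_contra hne
  obtain ⟨i, hVa, hVb⟩ := hV a b (Ne.symm hne)
  obtain ⟨_ | _, hc⟩ := hfin i
  · exact infinite_visits hb hVb hc
  · exact infinite_visits ha hVa hc

theorem exists_mem_dense_balls_mem_nhds {E : Type*} [MetricSpace E] {D : Set (Bool → E)}
    (hD : Dense D) {ε : ℝ} (hε : 0 < ε) {a b : E} (hab : a ≠ b) :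
    ∃ c ∈ D, ball (c true) (ε * dist (c true) (c false)) ∈ nhds a ∧
      ball (c false) (ε * dist (c true) (c false)) ∈ nhds b := by
  let U : Set (Bool → E) := {c | dist a (c true) < ε * dist (c true) (c false)} ∩
    {c | dist b (c false) < ε * dist (c true) (c false)}
  have hU : IsOpen U :=
    (isOpen_lt (by fun_prop) (by fun_prop)).inter (isOpen_lt (by fun_prop) (by fun_prop))
  have hpos : 0 < ε * dist a b := mul_pos hε (dist_pos.2 hab)
  obtain ⟨c, hcD, hca, hcb⟩ := hD.exists_mem_open hU
    ⟨fun i => bif i then a else b, by simpa [U] using hpos⟩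
  exact ⟨c, hcD, isOpen_ball.mem_nhds hca, isOpen_ball.mem_nhds hcb⟩

theorem exists_booleanIndependent_or_tendsto {S E : Type*} [MetricSpace E] [ProperSpace E]
    {f : ℕ → S → E} (hf : ∀ s, Bornology.IsBounded (range fun n => f n s)) {ε : ℝ} (hε : 0 < ε) :
    (∃ u : ℕ → ℕ, StrictMono u ∧ ∃ c : Bool → E, c true ≠ c false ∧
      BooleanIndependent fun k b => f (u k) ⁻¹' ball (c b) (ε * dist (c true) (c false))) ∨
      ∃ u : ℕ → ℕ, StrictMono u ∧ ∀ s, ∃ l, Tendsto (fun k => f (u k) s) atTop (nhds l) := by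
  obtain ⟨D, hDc, hD⟩ := TopologicalSpace.exists_countable_dense (Bool → E)
  have := hDc.to_subtype
  let V (c : D) (b : Bool) : Set E := ball (c.1 b) (ε * dist (c.1 true) (c.1 false))
  refine (exists_booleanIndependent_or_pairConvergesOn fun c n b => f n ⁻¹' V c b).imp ?_ ?_
  · rintro ⟨u, hu, c, hind⟩
    refine ⟨u, hu, c, fun hc => ?_, hind⟩
    obtain ⟨s, hs⟩ := hind {0} fun _ => true
    simp [V, hc] at hs
  · rintro ⟨u, hu, hconv⟩
    refine ⟨u, hu, fun s => exists_tendsto_of_finite_visits (hf s).isCompact_closure (V := V)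
      (fun a b hab => ?_) (fun k => subset_closure (mem_range_self _)) fun c => ?_⟩
    · obtain ⟨c, hcD, hc⟩ := exists_mem_dense_balls_mem_nhds hD hε hab
      exact ⟨⟨c, hcD⟩, hc⟩
    · obtain ⟨b, hb⟩ := hconv c s (mem_univ s)
      refine ⟨b, (hb.preimage hu.injective.injOn).subset fun k hk => ⟨mem_range_self k, hk⟩⟩

end PointwiseConvergence

section LowerEstimate

theorem exists_signs_sum_abs_eq {E ι : Type*} [AddCommGroup E] (g : E →+ ℝ) (I : Finset ι)
    (t : ι → E) :
    ∃ σ : ι → Bool, ∑ i ∈ I, |g (t i)| = g (∑ i ∈ I, bif σ i then t i else -t i) := by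
  refine ⟨fun i => decide (0 ≤ g (t i)), ?_⟩
  rw [map_sum]
  refine Finset.sum_congr rfl fun i _ => ?_
  by_cases h : 0 ≤ g (t i)
  · simp [h, abs_of_nonneg]
  · simp [h, abs_of_neg (not_le.1 h)]

variable {𝕜 : Type*} [RCLike 𝕜] {ι : Type*}

theorem norm_le_abs_re_add_abs_im (z : 𝕜) : ‖z‖ ≤ |RCLike.re z| + |RCLike.im z| := by
  refine le_of_sq_le_sq ?_ (by positivity)
  rw [RCLike.norm_sq_eq_def, add_sq, sq_abs, sq_abs]
  nlinarith [mul_nonneg (abs_nonneg (RCLike.re z)) (abs_nonneg (RCLike.im z))]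

theorem exists_signs_half_sum_norm_le (I : Finset ι) (t : ι → 𝕜) :
    ∃ σ : ι → Bool, (∑ i ∈ I, ‖t i‖) / 2 ≤ ‖∑ i ∈ I, bif σ i then t i else -t i‖ := by
  obtain ⟨σ, hσ⟩ := exists_signs_sum_abs_eq (RCLike.re : 𝕜 →+ ℝ) I t
  obtain ⟨τ, hτ⟩ := exists_signs_sum_abs_eq (RCLike.im : 𝕜 →+ ℝ) I t
  have hre := (le_abs_self _).trans (RCLike.abs_re_le_norm (∑ i ∈ I, bif σ i then t i else -t i))
  have him := (le_abs_self _).trans (RCLike.abs_im_le_norm (∑ i ∈ I, bif τ i then t i else -t i))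
  have hsum : ∑ i ∈ I, ‖t i‖ ≤ ∑ i ∈ I, |RCLike.re (t i)| + ∑ i ∈ I, |RCLike.im (t i)| := by
    rw [← Finset.sum_add_distrib]
    exact Finset.sum_le_sum fun i _ => norm_le_abs_re_add_abs_im (t i)
  rcases le_total (∑ i ∈ I, |RCLike.re (t i)|) (∑ i ∈ I, |RCLike.im (t i)|) with h | h
  · exact ⟨τ, by linarith⟩
  · exact ⟨σ, by linarith⟩

theorem BooleanIndependent.exists_le_norm_sum_mul_sub {S : Type*} {f : ι → S → 𝕜} {c : Bool → 𝕜}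
    {δ : ℝ} (h : BooleanIndependent fun i b => f i ⁻¹' ball (c b) δ) (I : Finset ι) (t : ι → 𝕜) :
    ∃ s s', (dist (c true) (c false) / 2 - 2 * δ) * ∑ i ∈ I, ‖t i‖ ≤
      ‖∑ i ∈ I, t i * (f i s - f i s')‖ := by
  obtain ⟨σ, hσ⟩ := exists_signs_half_sum_norm_le I t
  obtain ⟨s, hs⟩ := h I σ
  obtain ⟨s', hs'⟩ := h I fun i => !σ i
  simp only [mem_iInter, mem_preimage, mem_ball, dist_eq_norm] at hs hs'
  refine ⟨s, s', ?_⟩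
  let jump (i : ι) : 𝕜 := c (σ i) - c (!σ i)
  have hmain : dist (c true) (c false) / 2 * ∑ i ∈ I, ‖t i‖ ≤ ‖∑ i ∈ I, t i * jump i‖ := by
    have hjump (i : ι) : t i * jump i = (bif σ i then t i else -t i) * (c true - c false) := by
      cases hi : σ i with
      | true => simp only [jump, hi, cond_true, Bool.not_true]
      | false =>
        simp only [jump, hi, cond_false, Bool.not_false]
        ring
    simp only [hjump, ← Finset.sum_mul, norm_mul, ← dist_eq_norm]
    linarith [mul_le_mul_of_nonneg_right hσ (dist_nonneg (x := c true) (y := c false))]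
  have herror : ‖∑ i ∈ I, t i * jump i - ∑ i ∈ I, t i * (f i s - f i s')‖ ≤
      2 * δ * ∑ i ∈ I, ‖t i‖ := by
    rw [← Finset.sum_sub_distrib, Finset.mul_sum]
    refine norm_sum_le_of_le _ fun i hi => ?_
    have hsplit : t i * jump i - t i * (f i s - f i s') =
        t i * ((f i s' - c (!σ i)) - (f i s - c (σ i))) := by ring
    rw [hsplit, norm_mul, mul_comm]
    gcongr
    exact (norm_sub_le _ _).trans (by linarith [hs i hi, hs' i hi])
  linarith [norm_sub_norm_le (∑ i ∈ I, t i * jump i) (∑ i ∈ I, t i * (f i s - f i s'))]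

end LowerEstimate

section Functionals

variable {𝕜 : Type*} [NontriviallyNormedField 𝕜] {X : Type*} [SeminormedAddCommGroup X]
  [NormedSpace 𝕜 X] {ι : Type*} {x : ι → X}

theorem exists_tendsto_apply_of_forall_closedBall {F : Filter ι}
    (h : ∀ x' : closedBall (0 : X →L[𝕜] 𝕜) 1, ∃ l, Tendsto (fun i => x'.1 (x i)) F (nhds l))
    (x' : X →L[𝕜] 𝕜) : ∃ l, Tendsto (fun i => x' (x i)) F (nhds l) := by
  obtain ⟨a, ha⟩ := NormedField.exists_lt_norm 𝕜 ‖x'‖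
  have hapos : 0 < ‖a‖ := (norm_nonneg x').trans_lt ha
  have hmem : a⁻¹ • x' ∈ closedBall (0 : X →L[𝕜] 𝕜) 1 := by
    rw [mem_closedBall_zero_iff, norm_smul, norm_inv]
    exact inv_mul_le_one_of_le₀ ha.le hapos.le
  obtain ⟨l, hl⟩ := h ⟨a⁻¹ • x', hmem⟩
  exact ⟨a * l, by simpa [norm_pos_iff.1 hapos] using hl.const_mul a⟩

theorem isBounded_range_apply {C : ℝ} (hC : ∀ i, ‖x i‖ ≤ C)
    (x' : X →L[𝕜] 𝕜) : Bornology.IsBounded (range fun i => x' (x i)) :=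
  isBounded_iff_forall_norm_le.2
    ⟨‖x'‖ * C, forall_mem_range.2 fun i => x'.le_opNorm_of_le (hC i)⟩

end Functionals

section Rosenthal

variable {𝕜 : Type*} [RCLike 𝕜] {X : Type*} [SeminormedAddCommGroup X] [NormedSpace 𝕜 X]

theorem BooleanIndependent.le_norm_sum_smul {ι : Type*} {x : ι → X} {c : Bool → 𝕜} {δ : ℝ}
    (h : BooleanIndependent fun i b =>
      (fun x' : closedBall (0 : X →L[𝕜] 𝕜) 1 => x'.1 (x i)) ⁻¹' ball (c b) δ)
    (I : Finset ι) (t : ι → 𝕜) :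
    (dist (c true) (c false) / 4 - δ) * ∑ i ∈ I, ‖t i‖ ≤ ‖∑ i ∈ I, t i • x i‖ := by
  obtain ⟨⟨x', hx'⟩, ⟨y', hy'⟩, hle⟩ := h.exists_le_norm_sum_mul_sub I t
  have heval : ∑ i ∈ I, t i * (x' (x i) - y' (x i)) = (x' - y') (∑ i ∈ I, t i • x i) := by
    simp [mul_sub, Finset.sum_sub_distrib]
  have hnorm : ‖x' - y'‖ ≤ 2 := by
    linarith [norm_sub_le x' y', mem_closedBall_zero_iff.1 hx', mem_closedBall_zero_iff.1 hy']
  rw [heval] at hle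
  linarith [(x' - y').le_of_opNorm_le hnorm (∑ i ∈ I, t i • x i)]

theorem rosenthal_l1_general (x : ℕ → X) (hb : ∃ C : ℝ, ∀ n, ‖x n‖ ≤ C) :
    (∃ n : ℕ → ℕ, StrictMono n ∧ ∃ B : ℝ, 0 < B ∧
        ∀ (r : ℕ) (t : Fin r → 𝕜),
          B * ∑ k, ‖t k‖ ≤ ‖∑ k, t k • x (n k)‖) ∨
      (∃ n : ℕ → ℕ, StrictMono n ∧
        ∀ x' : X →L[𝕜] 𝕜, ∃ l : 𝕜,
          Tendsto (fun k => x' (x (n k))) atTop (nhds l)) := by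
  obtain ⟨C, hC⟩ := hb
  let f (n : ℕ) (x' : closedBall (0 : X →L[𝕜] 𝕜) 1) : 𝕜 := x'.1 (x n)
  refine (exists_booleanIndependent_or_tendsto (f := f)
    (fun x' => isBounded_range_apply hC x'.1) (ε := 1 / 8) (by norm_num)).imp ?_ ?_
  · rintro ⟨n, hn, c, hc, hind⟩
    refine ⟨n, hn, dist (c true) (c false) / 8, by simpa using hc, fun r t => ?_⟩
    have hle := (hind.comp Fin.val_injective).le_norm_sum_smul Finset.univ t
    linarith
  · rintro ⟨n, hn, hconv⟩
    exact ⟨n, hn, exists_tendsto_apply_of_forall_closedBall hconv⟩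

end Rosenthal

/-- **Rosenthal's `ℓ¹`-theorem.** Every bounded sequence in a (real or complex)
Banach space has either a subsequence equivalent to the unit vector basis of
`ℓ¹` or a weakly Cauchy subsequence. -/
theorem rosenthal_l1 {𝕜 : Type*} [RCLike 𝕜] {X : Type*}
    [NormedAddCommGroup X] [NormedSpace 𝕜 X] [CompleteSpace X]
    (x : ℕ → X) (hb : ∃ C : ℝ, ∀ n, ‖x n‖ ≤ C) :
    (∃ n : ℕ → ℕ, StrictMono n ∧ ∃ B : ℝ, 0 < B ∧
        ∀ (r : ℕ) (t : Fin r → 𝕜),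
          B * ∑ k, ‖t k‖ ≤ ‖∑ k, t k • x (n k)‖) ∨
      (∃ n : ℕ → ℕ, StrictMono n ∧
        ∀ x' : X →L[𝕜] 𝕜, ∃ l : 𝕜,
          Tendsto (fun k => x' (x (n k))) atTop (nhds l)) :=
  rosenthal_l1_general x hb
end
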